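/- arXiv:2001.00284 — 2 statements merged into one kernel-verified Lean document; each statement's English description precedes it below -/
import Mathlib

section
/- Let C be a monoidal category that is preadditive with tensor product additive in each variable, and let (A, η) be a weak ring in C, i.e., η : 𝟙 ⟶ A is such that A ◁ η : A ⟶ A ⊗ A is a split monomorphism. If for some n ≥ 1 the n-fold tensor power η^{⊗n} : 𝟙^{⊗n} ⟶ A^{⊗n} is the zero morphism, then A is a zero object. -/
/-!
In `A ◁ η^{⊗n}`, the copy of `A` on the left splits the first factor `η`, whose target is again `A`
and so splits the second factor, and so on. Hence `A ◁ η^{⊗n}` is a split monomorphism out of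
`A ⊗ 𝟙^{⊗n} ≅ A`, and `A` is zero as soon as this morphism is.
-/

open CategoryTheory CategoryTheory.Limits CategoryTheory.MonoidalCategory

universe v u

variable {C : Type u} [Category.{v} C] [MonoidalCategory C]

/-- The `n`-fold tensor power of an object. -/
def tpow (A : C) : ℕ → C
  | 0 => 𝟙_ C
  | n + 1 => A ⊗ tpow A n

/-- The `n`-fold tensor power of a morphism. -/
def tpowHom {A B : C} (f : A ⟶ B) : ∀ n : ℕ, tpow A n ⟶ tpow B n
  | 0 => 𝟙 _
  | n + 1 => f ⊗ₘ tpowHom f n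

/-- The canonical isomorphism `𝟙^{⊗n} ≅ 𝟙`, which identifies the source of `η^{⊗n}` with the unit.
It is built from left unitors, matching the bracketing of `tpow`. -/
def tpowUnitIso : ∀ n : ℕ, tpow (𝟙_ C) n ≅ 𝟙_ C
  | 0 => Iso.refl _
  | n + 1 => λ_ (tpow (𝟙_ C) n) ≪≫ tpowUnitIso n

instance isSplitMono_whiskerLeft (X : C) {Y Z : C} (f : Y ⟶ Z) [IsSplitMono f] :
    IsSplitMono (X ◁ f) :=
  inferInstanceAs (IsSplitMono ((tensorLeft X).map f))

instance isSplitMono_whiskerRight {Y Z : C} (f : Y ⟶ Z) [IsSplitMono f] (X : C) :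
    IsSplitMono (f ▷ X) :=
  inferInstanceAs (IsSplitMono ((tensorRight X).map f))

lemma isSplitMono_whiskerLeft_tensorHom (X : C) {Y₁ Z₁ Y₂ Z₂ : C} (f : Y₁ ⟶ Z₁) (g : Y₂ ⟶ Z₂)
    [IsSplitMono (X ◁ f)] [IsSplitMono (Z₁ ◁ g)] : IsSplitMono (X ◁ (f ⊗ₘ g)) := by
  rw [MonoidalCategory.tensorHom_def, whiskerLeft_comp, whisker_assoc_symm]
  infer_instance

lemma isSplitMono_whiskerLeft_tpowHom {A B : C} (f : B ⟶ A) [IsSplitMono (A ◁ f)] :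
    ∀ n : ℕ, IsSplitMono (A ◁ tpowHom f n)
  | 0 => isSplitMono_whiskerLeft A (𝟙 _)
  | n + 1 =>
    have := isSplitMono_whiskerLeft_tpowHom f n
    isSplitMono_whiskerLeft_tensorHom A f (tpowHom f n)

lemma isZero_tensor_tpow_of_tpowHom_eq_zero [HasZeroMorphisms C] {A B : C}
    [(tensorLeft A).PreservesZeroMorphisms] (f : B ⟶ A) [IsSplitMono (A ◁ f)] {n : ℕ}
    (hf : tpowHom f n = 0) : IsZero (A ⊗ tpow B n) := by
  have := isSplitMono_whiskerLeft_tpowHom f n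
  have whiskerLeft_eq_zero : A ◁ tpowHom f n = 0 := by
    rw [hf]
    exact (tensorLeft A).map_zero _ _
  exact IsZero.of_mono_eq_zero _ whiskerLeft_eq_zero

theorem weakRing_isZero_of_tpowHom_unit_eq_zero_general [HasZeroMorphisms C] {A : C}
    [(tensorLeft A).PreservesZeroMorphisms] (η : 𝟙_ C ⟶ A) [IsSplitMono (A ◁ η)] {n : ℕ}
    (hη : tpowHom η n = 0) : IsZero A := by
  have tensor_tpow_isZero : IsZero (A ⊗ tpow (𝟙_ C) n) :=
    isZero_tensor_tpow_of_tpowHom_eq_zero η hη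
  exact tensor_tpow_isZero.of_iso ((ρ_ A).symm ≪≫ whiskerLeftIso A (tpowUnitIso n).symm)

/-- If `(A, η)` is a weak ring (i.e. `A ◁ η` is a split monomorphism) in a preadditive
monoidal category with additive tensor, and the `n`-fold tensor power of `η` vanishes for
some `n ≥ 1`, then `A` is a zero object. -/
theorem weakRing_isZero_of_tpowHom_unit_eq_zero
    [Preadditive C] [MonoidalPreadditive C]
    (A : C) (η : 𝟙_ C ⟶ A) (h : IsSplitMono (A ◁ η))
    (n : ℕ) (hn : 1 ≤ n) (hz : tpowHom η n = 0) :
    IsZero A :=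
  weakRing_isZero_of_tpowHom_unit_eq_zero_general η hz
end

section
/- Let C and D be closed symmetric monoidal categories and let F : C ⥤ D be a strong symmetric monoidal functor with a right adjoint G : D ⥤ C that is fully faithful. Then for every object M of C and every object N of D there is an isomorphism F([M, G(N)]_C) ≅ [F(M), N]_D of internal-hom objects in D, natural in M and N. -/
open CategoryTheory CategoryTheory.Limits CategoryTheory.MonoidalCategory

universe v₁ v₂ u₁ u₂

/-!
Since `F` is strong monoidal, `F ⋙ (F M ⊗ -)` and `(M ⊗ -) ⋙ F` are isomorphic, so their right
adjoints `N ↦ G [F M, N]` and `N ↦ [M, G N]` are isomorphic as well, and conjugation makes the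
isomorphism natural in `M`. Applying `F` and cancelling `F (G -)` with the counit, which is
invertible because `G` is fully faithful, gives `F [M, G N] ≅ [F M, N]`.
-/

section

open Functor MonoidalClosed

variable {C : Type u₁} {D : Type u₂} [Category.{v₁} C] [Category.{v₂} D]
  [MonoidalCategory C] [MonoidalCategory D]

lemma commTensorLeft_hom_naturality (F : C ⥤ D) [F.Monoidal] {M M' : C} (f : M ⟶ M') :
    whiskerLeft F ((tensoringLeft D).map (F.map f)) ≫ (Monoidal.commTensorLeft F M').hom =
      (Monoidal.commTensorLeft F M).hom ≫ whiskerRight ((tensoringLeft C).map f) F := by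
  ext T
  exact LaxMonoidal.μ_natural_left F f T

variable {F : C ⥤ D} [F.Monoidal] {G : D ⥤ C} (adj : F ⊣ G)

/-- The isomorphism `[M, G N] ≅ G [F M, N]`, natural in `N`, encoded as the conjugate of the
tensorator `F M ⊗ F T ≅ F (M ⊗ T)`. -/
noncomputable def ihomRightAdjointIso (M : C) [Closed M] [Closed (F.obj M)] :
    G ⋙ ihom M ≅ ihom (F.obj M) ⋙ G :=
  conjugateIsoEquiv ((ihom.adjunction M).comp adj) (adj.comp (ihom.adjunction (F.obj M)))
    (Monoidal.commTensorLeft F M)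

lemma ihomRightAdjointIso_hom_naturality {M M' : C} [Closed M] [Closed M']
    [Closed (F.obj M)] [Closed (F.obj M')] (f : M ⟶ M') :
    whiskerLeft G (pre f) ≫ (ihomRightAdjointIso adj M).hom =
      (ihomRightAdjointIso adj M').hom ≫ whiskerRight (pre (F.map f)) G := by
  simp only [pre, ihomRightAdjointIso, conjugateIsoEquiv_apply_hom]
  rw [← conjugateEquiv_whiskerRight _ _ adj, ← conjugateEquiv_whiskerLeft _ _ adj,
    conjugateEquiv_comp, conjugateEquiv_comp, commTensorLeft_hom_naturality]

/-- The isomorphism `[M, G N] ≅ G [F M, N]`, natural in both `M` and `N`, encoded as an isomorphism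
of bifunctors `Cᵒᵖ ⥤ D ⥤ C`. -/
noncomputable def internalHomRightAdjointIso [MonoidalClosed C] [MonoidalClosed D] :
    internalHom (C := C) ⋙ (whiskeringLeft D C C).obj G ≅
      F.op ⋙ internalHom (C := D) ⋙ (whiskeringRight D D C).obj G :=
  NatIso.ofComponents (fun M ↦ ihomRightAdjointIso adj M.unop)
    fun f ↦ ihomRightAdjointIso_hom_naturality adj f.unop

end

section

open Functor

variable {C : Type u₁} {D : Type u₂} [Category.{v₁} C] [Category.{v₂} D]

/-- For a fully faithful right adjoint `G` of `F`, postcomposing functors `E ⥤ D` with `G` and then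
with `F` is isomorphic to doing nothing, through the counit. -/
noncomputable def whiskeringRightCounitIso (E : Type*) [Category* E] {F : C ⥤ D} {G : D ⥤ C}
    (adj : F ⊣ G) [G.Full] [G.Faithful] :
    (whiskeringRight E D C).obj G ⋙ (whiskeringRight E C D).obj F ≅ 𝟭 (E ⥤ D) :=
  whiskeringRightObjCompIso G F ≪≫ (whiskeringRight E D D).mapIso (asIso adj.counit) ≪≫
    whiskeringRightObjIdIso

end

theorem map_internalHom_rightAdjoint_iso_general
    {C : Type u₁} {D : Type u₂} [Category.{v₁} C] [Category.{v₂} D]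
    [MonoidalCategory C] [MonoidalClosed C] [MonoidalCategory D] [MonoidalClosed D]
    (F : C ⥤ D) [F.Monoidal] (G : D ⥤ C) (adj : F ⊣ G) [G.Full] [G.Faithful] :
    Nonempty
      ((MonoidalClosed.internalHom (C := C) ⋙ (Functor.whiskeringLeft D C C).obj G ⋙
          (Functor.whiskeringRight D C D).obj F) ≅
        (F.op ⋙ MonoidalClosed.internalHom (C := D))) :=
  ⟨Functor.isoWhiskerRight (internalHomRightAdjointIso adj)
      ((Functor.whiskeringRight D C D).obj F) ≪≫
    Functor.isoWhiskerLeft (F.op ⋙ MonoidalClosed.internalHom) (whiskeringRightCounitIso D adj)⟩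

/-- If `F : C ⥤ D` is a strong symmetric monoidal functor between closed symmetric
monoidal categories, with a fully faithful right adjoint `G`, then there is an
isomorphism `F [M, G N]_C ≅ [F M, N]_D`, natural in `M` and `N`, expressed here as an
isomorphism of bifunctors `Cᵒᵖ ⥤ D ⥤ D`. -/
theorem map_internalHom_rightAdjoint_iso
    {C : Type u₁} {D : Type u₂} [Category.{v₁} C] [Category.{v₂} D]
    [MonoidalCategory C] [SymmetricCategory C] [MonoidalClosed C]
    [MonoidalCategory D] [SymmetricCategory D] [MonoidalClosed D]
    (F : C ⥤ D) [F.Braided] (G : D ⥤ C) (adj : F ⊣ G) [G.Full] [G.Faithful] :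
    Nonempty
      ((MonoidalClosed.internalHom (C := C) ⋙ (Functor.whiskeringLeft D C C).obj G ⋙
          (Functor.whiskeringRight D C D).obj F) ≅
        (F.op ⋙ MonoidalClosed.internalHom (C := D))) :=
  map_internalHom_rightAdjoint_iso_general F G adj
end
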